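/- arXiv:2005.14076 — 2 statements merged into one kernel-verified Lean document; each statement's English description precedes it below -/
import Mathlib

section
/- The characteristic polynomial of a signed graph Γ satisfies Schwenk's formula at any vertex v: Φ(Γ, x) = x·Φ(Γ − v, x) − Σ_{uv ∈ E(Γ)} Φ(Γ − u − v, x) − 2·Σ_{C ∈ C_v} σ(C)·Φ(Γ − C, x), where C_v is the set of cycles through v and σ(C) is the sign of cycle C. -/
/-!
Write `M = xI - A` and expand `det M` as a sum over permutations `π`, grouped by the cycle `c` of
`π` through `v`. For fixed `c`, the permutations whose cycle through `v` is `c` are those agreeing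
with `c` on its support, and they contribute
`sgn c * (∏ i ∈ supp c, M (c i) i) * det M[V \ supp c]` (`sum_perm_agree`, `det_expand`).
Since off-diagonal entries of `M` are `-A i j` and `sgn c = -(-1) ^ |supp c|`, all these signs
collapse to a single minus sign (`perm_term`):

* the case `π v = v` gives `x * Φ(Γ - v)`;
* the cycles of length two are the transpositions `(v u)`, contributing `-A u v ^ 2 * Φ(Γ - u - v)`
  (`sum_swaps`);
* a cyclic permutation of length at least three along edges of `G` is the same thing as a graph
  cycle through `v` with a direction of travel. Each undirected cycle thus arises from exactly two
  mutually inverse permutations, whence the factor 2 (`sum_long_cycles`).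

The last correspondence sends a closed walk to the permutation moving each vertex of the walk to
the next one (`cyclePerm`). It is onto (`exists_cycle`), and the edge set of a walk determines its
permutation up to inversion (`mem_edges_iff`, `perm_eq_or_inv_of_adj`).
-/

open Polynomial

namespace SchwenkAux
open Equiv Finset

section Determinant

variable {V : Type*} [Fintype V] [DecidableEq V]

/-! ### Determinant expansion along cycles -/

/-- Permutations prescribed to agree with `c` on a set `S` containing the support of `c` contribute
`sgn c` times the product of the prescribed entries times the principal minor on the complement
of `S`. Erasing the
non-prescribed entries in the columns of `S` and permuting the rows by `c` makes the matrix block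
triangular with a diagonal block on `S`. -/
theorem sum_perm_agree {R : Type*} [CommRing R] (M : Matrix V V R) (S : Finset V)
    (c : Perm V) (hc : c.support ⊆ S) :
    ∑ π : Perm V with ∀ i ∈ S, π i = c i, ((Perm.sign π : ℤ) : R) * ∏ i, M (π i) i =
      ((Perm.sign c : ℤ) : R) * (∏ i ∈ S, M (c i) i) *
        (M.submatrix (fun i : {z // z ∉ S} => (i : V)) (fun i : {z // z ∉ S} => (i : V))).det := by
  -- `N` keeps, in each column `j ∈ S`, only the entry in row `c j`.
  set N : Matrix V V R :=
    Matrix.of fun i j => if j ∈ S then (if i = c j then M i j else 0) else M i j with hN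
  have h1 : N.det =
      ∑ π : Perm V with ∀ i ∈ S, π i = c i, ((Perm.sign π : ℤ) : R) * ∏ i, M (π i) i := by
    rw [Matrix.det_apply', Finset.sum_filter]
    refine Finset.sum_congr rfl fun π _ => ?_
    split_ifs with h
    · congr 1
      refine Finset.prod_congr rfl fun i _ => ?_
      by_cases hi : i ∈ S
      · simp [hN, hi, h i hi]
      · simp [hN, hi]
    · push Not at h
      obtain ⟨i, hi, hne⟩ := h
      rw [Finset.prod_eq_zero (Finset.mem_univ i), mul_zero]
      simp [hN, hi, hne]
  have h2 := Matrix.det_permute c N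
  have hfix : ∀ i, i ∉ S → c i = i := fun i hi => by
    by_contra h
    exact hi (hc (Perm.mem_support.2 h))
  have h3 : (N.submatrix c id).det = (∏ i ∈ S, M (c i) i) *
      (M.submatrix (fun i : {z // z ∉ S} => (i : V)) (fun i : {z // z ∉ S} => (i : V))).det := by
    rw [Matrix.twoBlockTriangular_det _ (fun i => i ∈ S)]
    · congr 1
      · have : (N.submatrix c id).toSquareBlockProp (fun i => i ∈ S) =
            Matrix.diagonal (fun i : {z // z ∈ S} => M (c i) i) := by
          ext ⟨i, hi⟩ ⟨j, hj⟩
          by_cases hij : i = j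
          · subst hij
            simp [hN, Matrix.toSquareBlockProp_def]
          · simp [hN, Matrix.toSquareBlockProp_def, hij]
        rw [this, ← Finset.prod_coe_sort S (fun i => M (c i) i)]
        convert! Matrix.det_diagonal (d := fun i : {z // z ∈ S} => M (c i) i)
      · congr 1
        ext ⟨i, hi⟩ ⟨j, hj⟩
        simp [hN, Matrix.toSquareBlockProp_def, hj, hfix i hi]
    · intro i hi j hj
      have : i ≠ j := fun h => hi (h ▸ hj)
      simp [hN, hj, this]
  rw [← h1, mul_assoc, ← h3, h2, ← mul_assoc, ← Int.cast_mul]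
  simp

theorem det_congr {R : Type*} [CommRing R] (A : Matrix V V R) (p q : V → Prop)
    (h : ∀ z, p z ↔ q z) [DecidablePred p] [DecidablePred q] :
    (A.submatrix (fun i : {z // p z} => (i : V)) (fun i : {z // p z} => (i : V))).det =
    (A.submatrix (fun i : {z // q z} => (i : V)) (fun i : {z // q z} => (i : V))).det := by
  obtain rfl : p = q := funext fun z => propext (h z)
  congr!

open Classical in
/-- Leibniz expansion grouped by the cycle containing `v`. The condition `c v ≠ v` says that the
cycle `c` passes through `v`. -/
theorem det_expand {R : Type*} [CommRing R] (M : Matrix V V R) (v : V) :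
    M.det = M v v * (M.submatrix (fun i : {z // z ≠ v} => (i : V))
        (fun i : {z // z ≠ v} => (i : V))).det +
      ∑ c : Perm V with c.IsCycle ∧ c v ≠ v,
        ((Perm.sign c : ℤ) : R) * (∏ i ∈ c.support, M (c i) i) *
        (M.submatrix (fun i : {z // z ∉ c.support} => (i : V))
          (fun i : {z // z ∉ c.support} => (i : V))).det := by
  rw [Matrix.det_apply', ← Finset.sum_filter_add_sum_filter_not _ (fun π : Perm V => π v = v)]
  congr 1
  · have := sum_perm_agree M {v} 1 (by simp)
    simp only [Finset.mem_singleton, forall_eq, Perm.one_apply, Perm.sign_one, Units.val_one,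
      Int.cast_one, one_mul, Finset.prod_singleton] at this
    rw [this]
    congr 1
    exact det_congr M _ _ (by simp)
  · rw [← Finset.sum_fiberwise_of_maps_to (g := fun π : Perm V => π.cycleOf v)
      (t := Finset.univ.filter fun c : Perm V => c.IsCycle ∧ c v ≠ v)]
    · refine Finset.sum_congr rfl fun c hc => ?_
      simp only [Finset.mem_filter, Finset.mem_univ, true_and] at hc
      rw [← sum_perm_agree M c.support c subset_rfl]
      refine Finset.sum_congr ?_ fun _ _ => rfl
      ext π
      simp only [Finset.mem_filter, Finset.mem_univ, true_and]
      constructor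
      · rintro ⟨h1, rfl⟩ i hi
        rw [Perm.mem_support_cycleOf_iff] at hi
        rw [hi.1.cycleOf_apply]
      · intro h
        have hv := Perm.mem_support.2 hc.2
        refine ⟨by rw [h v hv]; exact hc.2, ?_⟩
        exact (Perm.cycle_is_cycleOf hv (Perm.mem_cycleFactorsFinset_iff.2
          ⟨hc.1, fun a ha => (h a ha).symm⟩)).symm
    · intro π hπ
      simp only [Finset.mem_filter, Finset.mem_univ, true_and] at hπ ⊢
      exact ⟨Perm.isCycle_cycleOf π hπ, by simpa using hπ⟩

theorem charpoly_congr {R : Type*} [CommRing R] (A : Matrix V V R) (p q : V → Prop)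
    (h : ∀ z, p z ↔ q z) [DecidablePred p] [DecidablePred q] :
    (A.submatrix (fun i : {z // p z} => (i : V)) (fun i : {z // p z} => (i : V))).charpoly =
    (A.submatrix (fun i : {z // q z} => (i : V)) (fun i : {z // q z} => (i : V))).charpoly := by
  obtain rfl : p = q := funext fun z => propext (h z)
  congr!

theorem det_charmatrix_submatrix {R : Type*} [CommRing R] (A : Matrix V V R) (p : V → Prop)
    [DecidablePred p] :
    (A.charmatrix.submatrix (fun i : {z // p z} => (i : V)) (fun i : {z // p z} => (i : V))).det =
    (A.submatrix (fun i : {z // p z} => (i : V)) (fun i : {z // p z} => (i : V))).charpoly := by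
  unfold Matrix.charpoly
  congr 1
  ext1 i j
  simp [Matrix.charmatrix_apply, Matrix.diagonal_apply, Subtype.ext_iff]

open Classical in
/-- The contribution of the cycle `c` to `det (xI - A)` is minus its weight times the
characteristic polynomial of the remaining principal submatrix. -/
theorem perm_term {R : Type*} [CommRing R] (A : Matrix V V R) (hA : ∀ i j, A i j = A j i)
    (c : Perm V) (hc : c.IsCycle) :
    ((Perm.sign c : ℤ) : R[X]) * (∏ i ∈ c.support, A.charmatrix (c i) i) *
        (A.charmatrix.submatrix (fun i : {z // z ∉ c.support} => (i : V))
          (fun i : {z // z ∉ c.support} => (i : V))).det =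
      - ((∏ i ∈ c.support, A i (c i)) • (A.submatrix (fun i : {z // z ∉ c.support} => (i : V))
          (fun i : {z // z ∉ c.support} => (i : V))).charpoly) := by
  rw [det_charmatrix_submatrix, hc.sign]
  have : ∏ i ∈ c.support, A.charmatrix (c i) i =
      (-1) ^ #c.support * C (∏ i ∈ c.support, A i (c i)) := by
    rw [map_prod, ← Finset.prod_const, ← Finset.prod_mul_distrib]
    refine Finset.prod_congr rfl fun i hi => ?_
    rw [Matrix.charmatrix_apply_ne _ _ _ (Perm.mem_support.1 hi), hA]
    ring
  rw [this, Polynomial.smul_eq_C_mul]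
  have h2 : ((-1 : R[X]) ^ #c.support) * (-1) ^ #c.support = 1 := by
    rw [← mul_pow]; simp
  push_cast
  linear_combination (-(C (∏ i ∈ c.support, A i (c i))) * (A.submatrix (fun i : {z // z ∉ c.support} => (i : V))
          (fun i : {z // z ∉ c.support} => (i : V))).charpoly) * h2

end Determinant

section Graph

variable {V : Type*} [DecidableEq V] {G : SimpleGraph V} {v : V}

/-! ### Graph cycles as permutations -/

/-- The permutation sending each vertex of a closed walk to the next one, for a walk whose vertices
are distinct except for the repeated base point. The final occurrence of `v` is dropped so that
every vertex is listed once. -/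
def cyclePerm (w : G.Walk v v) : Perm V := w.support.dropLast.formPerm

theorem cyclePerm_dart {w : G.Walk v v} (hw : w.IsCycle) {d : G.Dart} (hd : d ∈ w.darts) :
    cyclePerm w d.fst = d.snd := by
  obtain ⟨i, hi, rfl⟩ := List.getElem_of_mem hd
  have hi' : i < w.length := by simpa using hi
  have hlen : w.support.dropLast.length = w.length := by simp
  rw [SimpleGraph.Walk.fst_darts_getElem, SimpleGraph.Walk.snd_darts_getElem, cyclePerm,
    List.formPerm_apply_getElem _ hw.nodup_dropLast_support]
  by_cases h : i + 1 = w.length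
  · simp [hlen, h]
  · simp [hlen, Nat.mod_eq_of_lt (show i + 1 < w.length by omega)]

theorem cyclePerm_isCycle {w : G.Walk v v} (hw : w.IsCycle) : (cyclePerm w).IsCycle :=
  List.isCycle_formPerm hw.nodup_dropLast_support (by have := hw.three_le_length; simp; omega)

variable [Fintype V]

theorem support_cyclePerm {w : G.Walk v v} (hw : w.IsCycle) :
    (cyclePerm w).support = w.support.dropLast.toFinset := by
  apply List.support_formPerm_of_nodup _ hw.nodup_dropLast_support
  intro x hx
  have := congrArg List.length hx
  have := hw.three_le_length
  simp at *
  omega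

theorem mem_support_cyclePerm {w : G.Walk v v} (hw : w.IsCycle) (z : V) :
    z ∈ (cyclePerm w).support ↔ z ∈ w.support := by
  rw [support_cyclePerm hw, List.mem_toFinset]
  constructor
  · exact List.mem_of_mem_dropLast
  · intro h
    rw [← SimpleGraph.Walk.map_fst_darts_append, List.mem_append, List.mem_singleton,
      SimpleGraph.Walk.map_fst_darts] at h
    rcases h with h | rfl
    · exact h
    · have h3 := hw.three_le_length
      have h0 : 0 < w.support.dropLast.length := by simp; omega
      have := List.getElem_mem h0
      simpa using this

theorem cyclePerm_apply_ne {w : G.Walk v v} (hw : w.IsCycle) : cyclePerm w v ≠ v := by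
  rw [← Perm.mem_support, mem_support_cyclePerm hw]
  simp

theorem cyclePerm_mul_self_ne {w : G.Walk v v} (hw : w.IsCycle) :
    cyclePerm w * cyclePerm w ≠ 1 := by
  intro h
  have h1 := orderOf_dvd_of_pow_eq_one (x := cyclePerm w) (n := 2) (by rw [pow_two, h])
  rw [(cyclePerm_isCycle hw).orderOf, support_cyclePerm hw,
    List.toFinset_card_of_nodup hw.nodup_dropLast_support] at h1
  have := Nat.le_of_dvd (by simp) h1
  have := hw.three_le_length
  simp at *
  omega

/-- The edges of a cycle are the pairs `{x, σ x}` for its permutation `σ`. -/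
theorem mem_edges_iff {w : G.Walk v v} (hw : w.IsCycle) (x y : V) (hxy : x ≠ y) :
    s(x, y) ∈ w.edges ↔ cyclePerm w x = y ∨ cyclePerm w y = x := by
  have key : ∀ x y, x ≠ y → cyclePerm w x = y → s(x, y) ∈ w.edges := by
    rintro x _ hxy rfl
    have hx : x ∈ (cyclePerm w).support := Perm.mem_support.2 hxy.symm
    rw [support_cyclePerm hw, List.mem_toFinset, ← SimpleGraph.Walk.map_fst_darts,
      List.mem_map] at hx
    obtain ⟨d, hd, rfl⟩ := hx
    rw [cyclePerm_dart hw hd]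
    exact List.mem_map.2 ⟨d, hd, rfl⟩
  constructor
  · intro h
    obtain ⟨d, hd, he⟩ := List.mem_map.1 h
    have hdd := cyclePerm_dart hw hd
    rcases Sym2.eq_iff.1 (show s(d.fst, d.snd) = s(x, y) from he) with ⟨rfl, rfl⟩ | ⟨rfl, rfl⟩
    · exact Or.inl hdd
    · exact Or.inr hdd
  · rintro (h | h)
    · exact key x y hxy h
    · rw [Sym2.eq_swap]
      exact key y x hxy.symm h

theorem prod_darts {w : G.Walk v v} (hw : w.IsCycle) {R : Type*} [CommRing R] (f : V → V → R) :
    (w.darts.map fun d => f d.toProd.1 d.toProd.2).prod =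
      ∏ i ∈ (cyclePerm w).support, f i (cyclePerm w i) := by
  rw [support_cyclePerm hw, List.prod_toFinset _ hw.nodup_dropLast_support,
    ← SimpleGraph.Walk.map_fst_darts, List.map_map]
  congr 1
  refine List.map_congr_left fun d hd => ?_
  simp [cyclePerm_dart hw hd]

/-- A permutation that moves points only along edges yields a walk of every length along the orbit
of `v`. -/
theorem exists_walk (c : Perm V) (h : ∀ x, c x ≠ x → G.Adj x (c x)) (hv : c v ≠ v) (n : ℕ) :
    ∃ w : G.Walk v ((c ^ n) v), w.length = n ∧
      w.support = (List.range (n + 1)).map (fun k => (c ^ k) v) ∧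
      ∀ d ∈ w.darts, c d.fst = d.snd := by
  induction n with
  | zero => refine ⟨(SimpleGraph.Walk.nil : G.Walk v v), rfl, rfl, fun d hd => absurd hd List.not_mem_nil⟩
  | succ n ih =>
    obtain ⟨w, h1, h2, h3⟩ := ih
    have hadj : G.Adj ((c ^ n) v) ((c ^ (n + 1)) v) := by
      rw [pow_succ', Perm.mul_apply]
      apply h
      rw [← Perm.mem_support, Perm.pow_apply_mem_support, Perm.mem_support]
      exact hv
    refine ⟨w.concat hadj, by simp [h1], ?_, ?_⟩
    · rw [SimpleGraph.Walk.support_concat, h2, List.range_succ (n := n + 1)]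
      simp
    · intro d hd
      rw [SimpleGraph.Walk.darts_concat] at hd
      simp only [List.concat_eq_append, List.mem_append, List.mem_singleton] at hd
      rcases hd with hd | rfl
      · exact h3 d hd
      · simp [pow_succ']

/-- Every cyclic permutation through `v`, of length at least three and moving points along edges,
comes from a graph cycle based at `v`. -/
theorem exists_cycle (c : Perm V) (hc : c.IsCycle) (h : ∀ x, c x ≠ x → G.Adj x (c x))
    (hv : c v ≠ v) (h2 : c * c ≠ 1) : ∃ w : G.Walk v v, w.IsCycle ∧ cyclePerm w = c := by
  obtain ⟨w, hlen, hsupp, hdart⟩ := exists_walk c h hv (orderOf c)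
  have hcv : (c ^ orderOf c) v = v := by simp [pow_orderOf_eq_one]
  have h3 : 3 ≤ orderOf c := by
    have h0 := orderOf_pos c
    have h1 : orderOf c ≠ 1 := fun e => hc.ne_one (orderOf_eq_one_iff.1 e)
    have : orderOf c ≠ 2 := fun e => h2 (by rw [← pow_two, ← e, pow_orderOf_eq_one])
    omega
  generalize hu : (c ^ orderOf c) v = u at w
  rw [hu] at hcv
  subst hcv
  have hw : w.IsCycle := by
    rw [SimpleGraph.Walk.isCycle_iff_isPath_tail_and_le_length]
    refine ⟨?_, by omega⟩
    apply SimpleGraph.Walk.IsPath.mk'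
    rw [SimpleGraph.Walk.support_tail_of_not_nil]
    · rw [hsupp, List.range_succ_eq_map]
      simp only [List.map_cons, List.tail_cons, List.map_map]
      refine List.Nodup.map_on ?_ List.nodup_range
      intro a ha b hb hab
      simp only [List.mem_range, Function.comp] at ha hb hab
      have : c ^ (a + 1) = c ^ (b + 1) := hc.pow_eq_pow_iff.2 ⟨_, hv, hab⟩
      rw [pow_succ, pow_succ, mul_left_inj] at this
      exact pow_injOn_Iio_orderOf ha hb this
    · rw [SimpleGraph.Walk.not_nil_iff_lt_length]; omega
  refine ⟨w, hw, ?_⟩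
  have hon : ∀ x ∈ (cyclePerm w).support, c x = cyclePerm w x := by
    intro x hx
    rw [support_cyclePerm hw, List.mem_toFinset, ← SimpleGraph.Walk.map_fst_darts,
      List.mem_map] at hx
    obtain ⟨d, hd, rfl⟩ := hx
    rw [cyclePerm_dart hw hd, hdart d hd]
  rw [← hc.cycleOf_eq hv]
  exact Perm.cycle_is_cycleOf (Perm.mem_support.2 (cyclePerm_apply_ne hw))
    (Perm.mem_cycleFactorsFinset_iff.2 ⟨cyclePerm_isCycle hw, fun a ha => (hon a ha).symm⟩)

/-! ### Recovering a cycle from its edges -/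

/-- A cycle of length at least three is determined by its undirected edges `{x, c x}` together with
the image of one point: following the orbit of `v`, the only alternative to moving forward is
stepping back, which injectivity excludes. -/
theorem perm_eq_of_adj (c c' : Perm V) (v : V) (hc : c.IsCycle) (hv : c v ≠ v)
    (h2 : c * c ≠ 1)
    (h : ∀ x y, x ≠ y → ((c x = y ∨ c y = x) ↔ (c' x = y ∨ c' y = x)))
    (hcv : c' v = c v) : c' = c := by
  -- A fixed point of `c * c` in the support of `c` would force `c * c = 1`.
  have hcc : ∀ x, c x ≠ x → c (c x) ≠ x := by
    intro x hx hxx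
    apply h2
    have := (hc.pow_eq_one_iff' (n := 2) hx).2 (by simpa [pow_two] using hxx)
    simpa [pow_two] using this
  have key : ∀ n : ℕ, c' ((c ^ n) v) = c ((c ^ n) v) := by
    intro n
    induction n with
    | zero => simpa using hcv
    | succ n ih =>
      rw [pow_succ', Perm.mul_apply]
      set x := (c ^ n) v with hx
      have hxx : c x ≠ x := by
        rw [← Perm.mem_support, hx, Perm.pow_apply_mem_support, Perm.mem_support]
        exact hv
      have hyy : c (c x) ≠ c x := fun e => hxx (c.injective e)
      rcases (h (c x) (c (c x)) hyy.symm).1 (Or.inl rfl) with h1 | h1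
      · exact h1
      · exfalso
        rw [← ih] at h1
        exact hcc x hxx (by rw [← ih]; simpa [ih] using c'.injective h1)
  ext x
  by_cases hx : c x = x
  · rw [hx]
    by_contra hne
    rcases (h x (c' x) (Ne.symm hne)).2 (Or.inl rfl) with h1 | h1
    · exact hne (by rw [← h1, hx])
    · exact hne (c.injective (h1.trans hx.symm))
  · obtain ⟨n, rfl⟩ := hc.exists_pow_eq hv hx
    exact key n

/-- The undirected edges of a cycle of length at least three determine it up to inversion. -/
theorem perm_eq_or_inv_of_adj (c c' : Perm V) (v : V) (hc : c.IsCycle) (hv : c v ≠ v)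
    (h2 : c * c ≠ 1)
    (h : ∀ x y, x ≠ y → ((c x = y ∨ c y = x) ↔ (c' x = y ∨ c' y = x))) :
    c' = c ∨ c' = c⁻¹ := by
  rcases (h v (c v) hv.symm).1 (Or.inl rfl) with h1 | h1
  · exact Or.inl (perm_eq_of_adj c c' v hc hv h2 h h1)
  · right
    rw [eq_comm, inv_eq_iff_eq_inv, eq_comm]
    refine perm_eq_of_adj c c'⁻¹ v hc hv h2 ?_ ?_
    · intro x y hxy
      rw [h x y hxy, Perm.inv_eq_iff_eq, Perm.inv_eq_iff_eq]
      grind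
    · rw [Perm.inv_eq_iff_eq, h1]

/-! ### Sums over cyclic permutations -/

open Classical in
/-- The cyclic permutations of order two through `v` are the transpositions `swap v u`. -/
theorem sum_swaps {M : Type*} [AddCommMonoid M] (v : V) (F : Perm V → M) :
    ∑ c : Perm V with (c.IsCycle ∧ c v ≠ v) ∧ c * c = 1, F c =
      ∑ u : V with u ≠ v, F (swap v u) := by
  refine Finset.sum_bij' (fun c _ => c v) (fun u _ => swap v u) ?_ ?_ ?_ ?_ ?_
  · intro c hc
    simpa using (Finset.mem_filter.1 hc).2.1.2
  · intro u hu
    have hu : u ≠ v := by simpa using hu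
    simp [Perm.isCycle_swap hu.symm, hu]
  · intro c hc
    obtain ⟨⟨h1, h2⟩, h3⟩ := (Finset.mem_filter.1 hc).2
    refine (h1.eq_swap_of_apply_apply_eq_self h2 ?_).symm
    rw [← Perm.mul_apply, h3, Perm.one_apply]
  · intro u hu
    simp
  · intro c hc
    obtain ⟨⟨h1, h2⟩, h3⟩ := (Finset.mem_filter.1 hc).2
    congr 1
    refine h1.eq_swap_of_apply_apply_eq_self h2 ?_
    rw [← Perm.mul_apply, h3, Perm.one_apply]

/-- The weight of a cycle does not depend on its direction. -/
theorem prod_inv_perm {R : Type*} [CommMonoid R] (A : V → V → R) (hA : ∀ i j, A i j = A j i)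
    (c : Perm V) : ∏ i ∈ c⁻¹.support, A i (c⁻¹ i) = ∏ i ∈ c.support, A i (c i) := by
  rw [Perm.support_inv]
  refine Finset.prod_equiv c⁻¹ ?_ ?_
  · intro i
    rw [← Perm.support_inv, Perm.apply_mem_support]
  · intro i _
    simp [hA]

open Classical in
/-- A direction-independent sum over cyclic permutations of length at least three through `v`,
supported on those moving along edges, is twice the sum over a set of representatives of the graph
cycles through `v`. -/
theorem sum_long_cycles {M : Type*} [AddCommMonoid M]
    (Cv : Finset (G.Walk v v))
    (hCv1 : ∀ w ∈ Cv, w.IsCycle)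
    (hCv2 : ∀ w : G.Walk v v, w.IsCycle →
      ∃! w', w' ∈ Cv ∧ w'.edges.toFinset = w.edges.toFinset)
    (F : Perm V → M) (hinv : ∀ c, F c⁻¹ = F c)
    (hzero : ∀ c : Perm V, (∃ x, c x ≠ x ∧ ¬ G.Adj x (c x)) → F c = 0) :
    ∑ c : Perm V with (c.IsCycle ∧ c v ≠ v) ∧ ¬ c * c = 1, F c =
      2 • ∑ w ∈ Cv, F (cyclePerm w) := by
  have hedge : ∀ w ∈ Cv, ∀ w' ∈ Cv, w.edges.toFinset = w'.edges.toFinset → w = w' := by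
    intro w hw w' hw' h
    exact (hCv2 w' (hCv1 w' hw')).unique ⟨hw, h⟩ ⟨hw', rfl⟩
  have hedge' : ∀ w ∈ Cv, ∀ w' ∈ Cv, (∀ x y, x ≠ y → (s(x, y) ∈ w.edges ↔ s(x, y) ∈ w'.edges)) →
      w = w' := by
    intro w hw w' hw' h
    refine hedge w hw w' hw' ?_
    ext e
    induction e using Sym2.ind with
    | _ x y =>
      by_cases hxy : x = y
      · subst hxy
        simp only [List.mem_toFinset]
        exact iff_of_false (fun h => (w.adj_of_mem_edges h).ne rfl)
          (fun h => (w'.adj_of_mem_edges h).ne rfl)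
      · simpa using h x y hxy
  have hinj : Set.InjOn (fun w : G.Walk v v => cyclePerm w) Cv := by
    intro w hw w' hw' h
    refine hedge' w hw w' hw' fun x y hxy => ?_
    rw [mem_edges_iff (hCv1 w hw) x y hxy, mem_edges_iff (hCv1 w' hw') x y hxy,
      show cyclePerm w = cyclePerm w' from h]
  have hinj2 : Set.InjOn (fun w : G.Walk v v => (cyclePerm w)⁻¹) Cv := by
    intro w hw w' hw' h
    exact hinj hw hw' (inv_injective h)
  -- A common element would be its own inverse, contradicting length at least three.
  have hdisj : Disjoint (Cv.image fun w => cyclePerm w)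
      (Cv.image fun w => (cyclePerm w)⁻¹) := by
    rw [Finset.disjoint_left]
    intro c hc hc'
    obtain ⟨w, hw, rfl⟩ := Finset.mem_image.1 hc
    obtain ⟨w', hw', h⟩ := Finset.mem_image.1 hc'
    have : w = w' := by
      refine hedge' w hw w' hw' fun x y hxy => ?_
      rw [mem_edges_iff (hCv1 w hw) x y hxy,
        mem_edges_iff (hCv1 w' hw') x y hxy, ← h, Perm.inv_eq_iff_eq, Perm.inv_eq_iff_eq]
      grind
    subst this
    apply cyclePerm_mul_self_ne (hCv1 w hw)
    nth_rewrite 1 [← h]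
    simp
  rw [two_nsmul]
  nth_rewrite 2 [← Finset.sum_congr rfl (fun w _ => hinv (cyclePerm w))]
  rw [← Finset.sum_image (f := F) hinj, ← Finset.sum_image (f := F) hinj2,
    ← Finset.sum_union hdisj]
  symm
  apply Finset.sum_subset
  · intro c hc
    simp only [Finset.mem_union, Finset.mem_image, Finset.mem_filter, Finset.mem_univ,
      true_and] at hc ⊢
    rcases hc with ⟨w, hw, rfl⟩ | ⟨w, hw, rfl⟩
    · exact ⟨⟨cyclePerm_isCycle (hCv1 w hw), cyclePerm_apply_ne (hCv1 w hw)⟩,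
        cyclePerm_mul_self_ne (hCv1 w hw)⟩
    · refine ⟨⟨(cyclePerm_isCycle (hCv1 w hw)).inv, ?_⟩, ?_⟩
      · rw [Ne, Perm.inv_eq_iff_eq, eq_comm]
        exact cyclePerm_apply_ne (hCv1 w hw)
      · rw [← mul_inv_rev, inv_eq_one]
        exact cyclePerm_mul_self_ne (hCv1 w hw)
  · intro c hc hnot
    obtain ⟨⟨h1, h2⟩, h3⟩ := (Finset.mem_filter.1 hc).2
    apply hzero
    by_contra! hadj
    obtain ⟨w, hw, rfl⟩ := exists_cycle c h1 hadj h2 h3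
    obtain ⟨w', ⟨hw', he⟩, -⟩ := hCv2 w hw
    have := perm_eq_or_inv_of_adj (cyclePerm w) (cyclePerm w') v h1 h2 h3
      fun x y hxy => by
        rw [← mem_edges_iff hw x y hxy, ← mem_edges_iff (hCv1 w' hw') x y hxy,
          ← List.mem_toFinset, ← List.mem_toFinset, he]
    apply hnot
    simp only [Finset.mem_union, Finset.mem_image]
    rcases this with h | h
    · exact Or.inl ⟨w', hw', h⟩
    · exact Or.inr ⟨w', hw', by rw [h, inv_inv]⟩

end Graph

end SchwenkAux

/-- Schwenk's formula for the characteristic polynomial of a signed graph at a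
vertex `v`:
`Φ(Γ,x) = x·Φ(Γ−v,x) − Σ_{uv ∈ E} Φ(Γ−u−v,x) − 2·Σ_{C ∈ C_v} σ(C)·Φ(Γ−C,x)`.
Here the signed graph is given by its sign function `sign` (with adjacency matrix
`Matrix.of sign`), `G` is its underlying simple graph, and `Cv` is a set of closed
walks at `v` containing exactly one representative of each cycle through `v`. -/
theorem stmt_11 {V : Type*} [Fintype V] [DecidableEq V]
    (sign : V → V → ℝ) (hsymm : ∀ i j, sign i j = sign j i)
    (hloop : ∀ i, sign i i = 0)
    (hvals : ∀ i j, sign i j = 0 ∨ sign i j = 1 ∨ sign i j = -1)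
    (G : SimpleGraph V) (hG : ∀ i j, G.Adj i j ↔ sign i j ≠ 0)
    (v : V)
    (Cv : Finset (G.Walk v v))
    (hCv1 : ∀ w ∈ Cv, w.IsCycle)
    (hCv2 : ∀ w : G.Walk v v, w.IsCycle →
      ∃! w', w' ∈ Cv ∧ w'.edges.toFinset = w.edges.toFinset) :
    (Matrix.of sign).charpoly =
      X * ((Matrix.of sign).submatrix
            (fun i : {w : V // w ≠ v} => (i : V)) (fun i : {w : V // w ≠ v} => (i : V))).charpoly
      - ∑ u : V, (if sign u v ≠ 0 then
          ((Matrix.of sign).submatrix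
            (fun i : {w : V // w ≠ u ∧ w ≠ v} => (i : V))
            (fun i : {w : V // w ≠ u ∧ w ≠ v} => (i : V))).charpoly else 0)
      - 2 • ∑ w ∈ Cv,
          ((w.darts.map fun d => sign d.toProd.1 d.toProd.2).prod) •
            ((Matrix.of sign).submatrix
              (fun i : {z : V // z ∉ w.support} => (i : V))
              (fun i : {z : V // z ∉ w.support} => (i : V))).charpoly := by
  classical
  have hA : ∀ i j, Matrix.of sign i j = Matrix.of sign j i := hsymm
  -- `F c` is the weight of the cycle `c` times `Φ(Γ - supp c)`, so `c` contributes `-F c`.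
  set F : Equiv.Perm V → ℝ[X] := fun c => (∏ i ∈ c.support, sign i (c i)) •
    ((Matrix.of sign).submatrix (fun i : {z // z ∉ c.support} => (i : V))
          (fun i : {z // z ∉ c.support} => (i : V))).charpoly with hF
  have hinv : ∀ c, F c⁻¹ = F c := by
    intro c
    simp only [hF]
    rw [SchwenkAux.prod_inv_perm sign hsymm]
    congr 1
    exact SchwenkAux.charpoly_congr _ _ _ (by simp)
  have hzero : ∀ c : Equiv.Perm V, (∃ x, c x ≠ x ∧ ¬ G.Adj x (c x)) → F c = 0 := by
    rintro c ⟨x, hx, hadj⟩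
    simp only [hF]
    rw [Finset.prod_eq_zero (Equiv.Perm.mem_support.2 hx), zero_smul]
    rw [hG] at hadj
    exact not_not.1 hadj
  have hswap : ∑ u : V with u ≠ v, F (Equiv.swap v u) = ∑ u : V, (if sign u v ≠ 0 then
          ((Matrix.of sign).submatrix
            (fun i : {w : V // w ≠ u ∧ w ≠ v} => (i : V))
            (fun i : {w : V // w ≠ u ∧ w ≠ v} => (i : V))).charpoly else 0) := by
    rw [Finset.sum_filter]
    refine Finset.sum_congr rfl fun u _ => ?_
    by_cases huv : u = v
    · simp [huv, hloop]
    -- A transposition has weight `(sign u v) ^ 2`, which is `1` on edges and `0` off them.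
    have hw : ∏ i ∈ (Equiv.swap v u).support, sign i (Equiv.swap v u i) = sign u v * sign u v := by
      rw [Equiv.Perm.support_swap (Ne.symm huv), Finset.prod_pair (Ne.symm huv)]
      simp [hsymm v u]
    simp only [hF]
    rw [if_pos huv, hw]
    rcases hvals u v with h | h | h
    · simp [h]
    all_goals
      rw [h, if_pos (by norm_num)]
      norm_num
      refine SchwenkAux.charpoly_congr _ _ _ fun z => ?_
      have := Equiv.Perm.support_swap (Ne.symm huv)
      rw [this]
      simp [and_comm]
  have hcycles : ∑ w ∈ Cv, F (SchwenkAux.cyclePerm w) = ∑ w ∈ Cv,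
          ((w.darts.map fun d => sign d.toProd.1 d.toProd.2).prod) •
            ((Matrix.of sign).submatrix
              (fun i : {z : V // z ∉ w.support} => (i : V))
              (fun i : {z : V // z ∉ w.support} => (i : V))).charpoly := by
    refine Finset.sum_congr rfl fun w hw => ?_
    simp only [hF]
    rw [SchwenkAux.prod_darts (hCv1 w hw)]
    congr 1
    exact SchwenkAux.charpoly_congr _ _ _ fun z => by rw [SchwenkAux.mem_support_cyclePerm (hCv1 w hw)]
  rw [← hswap, ← hcycles, ← SchwenkAux.sum_long_cycles Cv hCv1 hCv2 F hinv hzero, ← SchwenkAux.sum_swaps,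
    sub_sub]
  have hsplit := Finset.sum_filter_add_sum_filter_not
    (Finset.univ.filter fun c : Equiv.Perm V => c.IsCycle ∧ c v ≠ v) (fun c => c * c = 1) F
  rw [Finset.filter_filter, Finset.filter_filter] at hsplit
  rw [hsplit, Matrix.charpoly, SchwenkAux.det_expand _ v, SchwenkAux.det_charmatrix_submatrix,
    Matrix.charmatrix_apply_eq, Matrix.of_apply, hloop, C_0, sub_zero, sub_eq_add_neg,
    ← Finset.sum_neg_distrib]
  congr 1
  refine Finset.sum_congr rfl fun c hc => ?_
  exact SchwenkAux.perm_term _ hA c (Finset.mem_filter.1 hc).2.1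
end

section
/- For n ≥ 36, let λ_1 be the largest root of f_1(x) = x⁴ − n x² + n − 5 and λ_2 the largest root of f_2(x) = x⁴ − (n+1)x² + 2n − 4. Then λ_1 > λ_2. -/
/-!
Every real root `l2` of `f₂` satisfies `l2² (n + 1 - l2²) = 2n - 4 > 0`, hence `l2² < n + 1`. Since
`f₁(x) = f₂(x) + x² - (n + 1)`, this gives `f₁(l2) < 0`. As `f₁(n) > 0` and `l2 < n`, the
intermediate value theorem yields a root of `f₁` in `[l2, n]`, different from `l2`, and the largest
root `l1` of `f₁` is at least that root.
-/

/-- For `n ≥ 36`, the largest root `λ₁` of `f₁(x) = x⁴ − nx² + n − 5` exceeds the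
largest root `λ₂` of `f₂(x) = x⁴ − (n+1)x² + 2n − 4`. -/
theorem stmt_14 (n : ℕ) (hn : 36 ≤ n) (l1 l2 : ℝ)
    (h1 : l1 ^ 4 - (n : ℝ) * l1 ^ 2 + (n : ℝ) - 5 = 0)
    (h1max : ∀ t : ℝ, t ^ 4 - (n : ℝ) * t ^ 2 + (n : ℝ) - 5 = 0 → t ≤ l1)
    (h2 : l2 ^ 4 - ((n : ℝ) + 1) * l2 ^ 2 + 2 * (n : ℝ) - 4 = 0)
    (h2max : ∀ t : ℝ, t ^ 4 - ((n : ℝ) + 1) * t ^ 2 + 2 * (n : ℝ) - 4 = 0 → t ≤ l2) :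
    l2 < l1 := by
  have hn' : (36 : ℝ) ≤ n := by exact_mod_cast hn
  have hsq : l2 ^ 2 < (n : ℝ) + 1 := by
    by_contra! h
    nlinarith [mul_nonneg (sq_nonneg l2) (sub_nonneg.2 h)]
  have hneg : l2 ^ 4 - (n : ℝ) * l2 ^ 2 + (n : ℝ) - 5 < 0 := by linarith
  have hle : l2 ≤ n := by
    by_contra! h
    nlinarith
  have hpos : (0 : ℝ) ≤ (n : ℝ) ^ 4 - (n : ℝ) * (n : ℝ) ^ 2 + (n : ℝ) - 5 := by
    have h3 : (0 : ℝ) ≤ (n : ℝ) ^ 3 * ((n : ℝ) - 1) :=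
      mul_nonneg (by positivity) (by linarith)
    linarith
  have hcont : ContinuousOn (fun x : ℝ => x ^ 4 - (n : ℝ) * x ^ 2 + (n : ℝ) - 5)
      (Set.Icc l2 n) := by fun_prop
  obtain ⟨t, ht, hroot⟩ := intermediate_value_Icc hle hcont ⟨hneg.le, hpos⟩
  have hne : l2 ≠ t := by
    rintro rfl
    exact hneg.ne hroot
  exact (lt_of_le_of_ne ht.1 hne).trans_le (h1max t hroot)
end
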